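/- arXiv:1111.3067 — 2 statements merged into one kernel-verified Lean document; each statement's English description precedes it below -/
import Mathlib

section
/- Let T be an infinite locally finite tree and let Π be a partition of the vertex set of T such that every cell of Π is finite, induces a connected subgraph of T, and contains at least one furcation of T. Then every vertex of the quotient graph T^Π is a furcation of T^Π; in particular, every vertex of T^Π has degree at least 3. -/
/-- A graph has at least three infinite connected components. -/
def HasThreeInfiniteComponents {W : Type*} (H : SimpleGraph W) : Prop :=
  ∃ c₁ c₂ c₃ : H.ConnectedComponent, c₁ ≠ c₂ ∧ c₁ ≠ c₃ ∧ c₂ ≠ c₃ ∧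
    c₁.supp.Infinite ∧ c₂.supp.Infinite ∧ c₃.supp.Infinite

/-- A vertex `v` of a graph `H` is a furcation if deleting `v` leaves at least three
infinite connected components. -/
def IsFurcation {W : Type*} (H : SimpleGraph W) (v : W) : Prop :=
  HasThreeInfiniteComponents (H.induce {u : W | u ≠ v})

/-- The quotient graph `T^Π` of a graph `T` by a partition `P` of its vertex set:
its vertices are the cells of `P`, and two distinct cells are adjacent iff some edge
of `T` joins a vertex of one to a vertex of the other. -/
def quotientGraph {V : Type*} (T : SimpleGraph V) (P : Set (Set V)) : SimpleGraph P :=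
  SimpleGraph.fromRel (fun C C' => ∃ u ∈ (C : Set V), ∃ v ∈ (C' : Set V), T.Adj u v)

/-!
Let `C` be a cell. Since cells are connected, the components of `T^Π - C` correspond to those of
`T - C`.

All components of `T^Π - C` are infinite. Indeed such a component contains a cell `D`, and `D`
contains a furcation `w`. The connected set `C` meets at most one component of `T - w`, so some
infinite component `K` of `T - w` avoids `C`. As `K` is joined to `w` by an edge, `K` lies in the
component of `w` in `T - C`, and infinitely many of the finite cells are needed to cover it.

There are at least three components: if `v` is a furcation in `C`, each of the infinite components
of `T - v` has a vertex outside the finite set `C`, and vertices in different components of `T - v`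
lie in different components of `T - C`. As `T^Π` is connected, each component of `T^Π - C` contains
a neighbour of `C`.
-/

section Components

variable {W : Type*} {H : SimpleGraph W}

theorem reachable_of_forall_adj_reachable {W' : Type*} {H' : SimpleGraph W'} (f : W → W')
    (hf : ∀ x y, H.Adj x y → H'.Reachable (f x) (f y)) {x y : W} (hxy : H.Reachable x y) :
    H'.Reachable (f x) (f y) := by
  simp only [SimpleGraph.reachable_iff_reflTransGen] at hf hxy ⊢
  exact Relation.ReflTransGen.lift' f hf x y hxy

theorem reachable_induce_of_mem_supp {s t : Set W} (K : (H.induce s).ConnectedComponent)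
    (hKt : ∀ z ∈ K.supp, (z : W) ∈ t) {x y : s} (hx : x ∈ K.supp) (hy : y ∈ K.supp) :
    (H.induce t).Reachable ⟨x, hKt x hx⟩ ⟨y, hKt y hy⟩ := by
  let incl : K.toSimpleGraph →g H.induce t := ⟨fun z => ⟨z.1, hKt z.1 z.2⟩, id⟩
  exact (K.connected_toSimpleGraph.preconnected ⟨x, hx⟩ ⟨y, hy⟩).map incl

theorem exists_adj_of_component_induce_ne (hH : H.Preconnected) {v : W}
    (K : (H.induce {u | u ≠ v}).ConnectedComponent) : ∃ d ∈ K.supp, H.Adj v d := by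
  obtain ⟨x, hx⟩ := K.nonempty_supp
  obtain ⟨p⟩ := hH x v
  obtain ⟨e, -, ⟨d, hd, hde⟩, hsnd⟩ := p.exists_boundary_dart (Subtype.val '' K.supp)
    ⟨x, hx, rfl⟩ (by rintro ⟨d, -, hdv⟩; exact d.2 hdv)
  have hadj : H.Adj d e.snd := hde ▸ e.adj
  have hsnd_eq : e.snd = v := by
    by_contra hne
    exact hsnd ⟨⟨e.snd, hne⟩, K.mem_supp_of_adj_mem_supp hd hadj, rfl⟩
  exact ⟨d, hd, hsnd_eq ▸ hadj.symm⟩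

theorem IsFurcation.exists_three_adj (hH : H.Preconnected) {v : W} (hv : IsFurcation H v) :
    ∃ d₁ d₂ d₃ : W, d₁ ≠ d₂ ∧ d₁ ≠ d₃ ∧ d₂ ≠ d₃ ∧ H.Adj v d₁ ∧ H.Adj v d₂ ∧ H.Adj v d₃ := by
  obtain ⟨K₁, K₂, K₃, h₁₂, h₁₃, h₂₃, -, -, -⟩ := hv
  obtain ⟨d₁, hd₁, hadj₁⟩ := exists_adj_of_component_induce_ne hH K₁
  obtain ⟨d₂, hd₂, hadj₂⟩ := exists_adj_of_component_induce_ne hH K₂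
  obtain ⟨d₃, hd₃, hadj₃⟩ := exists_adj_of_component_induce_ne hH K₃
  have val_ne {K L : (H.induce {u | u ≠ v}).ConnectedComponent} (hKL : K ≠ L)
      {x y : {u | u ≠ v}} (hx : x ∈ K.supp) (hy : y ∈ L.supp) : (x : W) ≠ y := fun hxy =>
    hKL (SimpleGraph.ConnectedComponent.eq_of_common_vertex hx (Subtype.ext hxy ▸ hy))
  exact ⟨d₁, d₂, d₃, val_ne h₁₂ hd₁ hd₂, val_ne h₁₃ hd₁ hd₃, val_ne h₂₃ hd₂ hd₃,
    hadj₁, hadj₂, hadj₃⟩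

theorem IsFurcation.exists_infinite_component_disjoint {w : W} (hw : IsFurcation H w) {A : Set W}
    (hA : (H.induce A).Preconnected) (hwA : w ∉ A) :
    ∃ K : (H.induce {u | u ≠ w}).ConnectedComponent,
      K.supp.Infinite ∧ ∀ z ∈ K.supp, (z : W) ∉ A := by
  obtain ⟨K₁, K₂, -, h₁₂, -, -, hinf₁, hinf₂, -⟩ := hw
  have hA_sub : A ⊆ {u | u ≠ w} := fun u hu huw => hwA (huw ▸ hu)
  by_contra! hmeet
  obtain ⟨x, hx, hxA⟩ := hmeet K₁ hinf₁
  obtain ⟨y, hy, hyA⟩ := hmeet K₂ hinf₂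
  have hxy : (H.induce {u | u ≠ w}).Reachable x y :=
    (hA ⟨x, hxA⟩ ⟨y, hyA⟩).map (H.induceHomOfLE hA_sub).toHom
  exact h₁₂ (hx.symm.trans ((SimpleGraph.ConnectedComponent.sound hxy).trans hy))

theorem IsFurcation.infinite_component_induce_compl (hH : H.Preconnected) {w : W}
    (hw : IsFurcation H w) {A : Set W} (hA : (H.induce A).Preconnected) (hwA : w ∉ A) :
    ((H.induce Aᶜ).connectedComponentMk ⟨w, hwA⟩).supp.Infinite := by
  obtain ⟨K, hKinf, hKA⟩ := hw.exists_infinite_component_disjoint hA hwA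
  obtain ⟨d, hd, hwd⟩ := exists_adj_of_component_induce_ne hH K
  have hd_reach : (H.induce Aᶜ).Reachable ⟨d, hKA d hd⟩ ⟨w, hwA⟩ :=
    SimpleGraph.Adj.reachable (G := H.induce Aᶜ) hwd.symm
  have hK_subset : Subtype.val '' K.supp ⊆
      Subtype.val '' ((H.induce Aᶜ).connectedComponentMk ⟨w, hwA⟩).supp := by
    rintro _ ⟨z, hz, rfl⟩
    exact ⟨⟨z, hKA z hz⟩, SimpleGraph.ConnectedComponent.sound
      ((reachable_induce_of_mem_supp K hKA hz hd).trans hd_reach), rfl⟩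
  exact ((hKinf.image Subtype.val_injective.injOn).mono hK_subset).of_image _

end Components

section Quotient

variable {V : Type*} {T : SimpleGraph V} {P : Set (Set V)}

theorem quotientGraph_adj {C D : P} :
    (quotientGraph T P).Adj C D ↔
      C ≠ D ∧ ∃ u ∈ (C : Set V), ∃ v ∈ (D : Set V), T.Adj u v := by
  rw [quotientGraph, SimpleGraph.fromRel_adj]
  refine and_congr_right fun _ => or_iff_left_of_imp ?_
  rintro ⟨v, hv, u, hu, hvu⟩
  exact ⟨u, hu, v, hv, hvu.symm⟩

/-- The cell of the partition `P` containing `x`, as a vertex of the quotient graph. -/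
noncomputable def cellOf (hP : Setoid.IsPartition P) (x : V) : P :=
  ⟨(hP.2 x).choose, (hP.2 x).choose_spec.1.1⟩

theorem mem_cellOf (hP : Setoid.IsPartition P) (x : V) : x ∈ (cellOf hP x : Set V) :=
  (hP.2 x).choose_spec.1.2

theorem cellOf_eq_iff (hP : Setoid.IsPartition P) {x : V} {C : P} :
    cellOf hP x = C ↔ x ∈ (C : Set V) :=
  ⟨fun h => h ▸ mem_cellOf hP x, fun h =>
    Subtype.ext ((hP.2 x).unique ⟨(cellOf hP x).2, mem_cellOf hP x⟩ ⟨C.2, h⟩)⟩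

theorem notMem_of_mem_of_ne (hP : Setoid.IsPartition P) {C D : P} (hDC : D ≠ C) {x : V}
    (hx : x ∈ (D : Set V)) : x ∉ (C : Set V) := fun hxC =>
  hDC (((cellOf_eq_iff hP).2 hx).symm.trans ((cellOf_eq_iff hP).2 hxC))

theorem cellOf_surjective (hP : Setoid.IsPartition P) : Function.Surjective (cellOf hP) := by
  intro C
  obtain ⟨x, hx⟩ := Setoid.nonempty_of_mem_partition hP C.2
  exact ⟨x, (cellOf_eq_iff hP).2 hx⟩

theorem quotientGraph_adj_cellOf (hP : Setoid.IsPartition P) {x y : V} (hxy : T.Adj x y)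
    (hne : cellOf hP x ≠ cellOf hP y) :
    (quotientGraph T P).Adj (cellOf hP x) (cellOf hP y) :=
  quotientGraph_adj.2 ⟨hne, x, mem_cellOf hP x, y, mem_cellOf hP y, hxy⟩

theorem quotientGraph_preconnected (hP : Setoid.IsPartition P) (hT : T.Preconnected) :
    (quotientGraph T P).Preconnected := by
  refine (cellOf_surjective hP).forall₂.2 fun x y =>
    reachable_of_forall_adj_reachable (cellOf hP) (fun a b hab => ?_) (hT x y)
  by_cases hcell : cellOf hP a = cellOf hP b
  · rw [hcell]
  · exact (quotientGraph_adj_cellOf hP hab hcell).reachable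

/-- The projection `T - C → T^Π - C` sending a vertex outside the cell `C` to its own cell. -/
noncomputable def cellOfCompl (hP : Setoid.IsPartition P) (C : P) (x : ((C : Set V)ᶜ : Set V)) :
    {D : P | D ≠ C} :=
  ⟨cellOf hP x, fun h => x.2 ((cellOf_eq_iff hP).1 h)⟩

theorem cellOfCompl_eq_iff (hP : Setoid.IsPartition P) {C : P} {x : ((C : Set V)ᶜ : Set V)}
    {D : {D : P | D ≠ C}} : cellOfCompl hP C x = D ↔ (x : V) ∈ (D : Set V) :=
  Subtype.ext_iff.trans (cellOf_eq_iff hP)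

theorem cellOfCompl_surjective (hP : Setoid.IsPartition P) (C : P) :
    Function.Surjective (cellOfCompl hP C) := by
  intro D
  obtain ⟨x, hx⟩ := cellOf_surjective hP D
  exact ⟨⟨x, notMem_of_mem_of_ne hP D.2 ((cellOf_eq_iff hP).1 hx)⟩, Subtype.ext hx⟩

theorem reachable_cellOfCompl (hP : Setoid.IsPartition P) {C : P}
    {x y : ((C : Set V)ᶜ : Set V)} (hxy : (T.induce (C : Set V)ᶜ).Reachable x y) :
    ((quotientGraph T P).induce {D | D ≠ C}).Reachable
      (cellOfCompl hP C x) (cellOfCompl hP C y) := by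
  refine reachable_of_forall_adj_reachable (cellOfCompl hP C) (fun a b hab => ?_) hxy
  by_cases hcell : cellOf hP (a : V) = cellOf hP (b : V)
  · rw [show cellOfCompl hP C a = cellOfCompl hP C b from Subtype.ext hcell]
  · exact SimpleGraph.Adj.reachable (G := (quotientGraph T P).induce {D | D ≠ C})
      (quotientGraph_adj_cellOf hP hab hcell)

theorem reachable_of_cellOfCompl_eq (hP : Setoid.IsPartition P)
    (hconn : ∀ C ∈ P, (T.induce C).Preconnected) {C : P} {x y : ((C : Set V)ᶜ : Set V)}
    (hxy : cellOfCompl hP C x = cellOfCompl hP C y) :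
    (T.induce (C : Set V)ᶜ).Reachable x y := by
  set D := cellOfCompl hP C y with hD
  have hDC : (D : Set V) ⊆ (C : Set V)ᶜ := fun _ => notMem_of_mem_of_ne hP D.2
  exact (hconn D D.1.2 ⟨x, (cellOfCompl_eq_iff hP).1 hxy⟩
    ⟨y, (cellOfCompl_eq_iff hP).1 hD.symm⟩).map (T.induceHomOfLE hDC).toHom

theorem reachable_of_reachable_cellOfCompl (hP : Setoid.IsPartition P)
    (hconn : ∀ C ∈ P, (T.induce C).Preconnected) {C : P} {x y : ((C : Set V)ᶜ : Set V)}
    (hxy : ((quotientGraph T P).induce {D | D ≠ C}).Reachable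
      (cellOfCompl hP C x) (cellOfCompl hP C y)) :
    (T.induce (C : Set V)ᶜ).Reachable x y := by
  let rep := Function.surjInv (cellOfCompl_surjective hP C)
  have cell_rep (D) : cellOfCompl hP C (rep D) = D := Function.surjInv_eq _ D
  have rep_reachable : (T.induce (C : Set V)ᶜ).Reachable
      (rep (cellOfCompl hP C x)) (rep (cellOfCompl hP C y)) := by
    refine reachable_of_forall_adj_reachable rep (fun D E hDE => ?_) hxy
    obtain ⟨-, u, hu, v, hv, huv⟩ := quotientGraph_adj.1 hDE
    let u' : ((C : Set V)ᶜ : Set V) := ⟨u, notMem_of_mem_of_ne hP D.2 hu⟩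
    let v' : ((C : Set V)ᶜ : Set V) := ⟨v, notMem_of_mem_of_ne hP E.2 hv⟩
    have hDu : (T.induce (C : Set V)ᶜ).Reachable (rep D) u' :=
      reachable_of_cellOfCompl_eq hP hconn
        ((cell_rep D).trans ((cellOfCompl_eq_iff hP).2 hu).symm)
    have huv' : (T.induce (C : Set V)ᶜ).Adj u' v' := huv
    have hvE : (T.induce (C : Set V)ᶜ).Reachable v' (rep E) :=
      reachable_of_cellOfCompl_eq hP hconn
        (((cellOfCompl_eq_iff hP).2 hv).trans (cell_rep E).symm)
    exact (hDu.trans huv'.reachable).trans hvE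
  exact ((reachable_of_cellOfCompl_eq hP hconn (cell_rep _).symm).trans rep_reachable).trans
    (reachable_of_cellOfCompl_eq hP hconn (cell_rep _))

theorem connectedComponentMk_induce_ne_eq_of_cellOfCompl (hP : Setoid.IsPartition P)
    (hconn : ∀ C ∈ P, (T.induce C).Preconnected) {C : P} {v : V} (hvC : v ∈ (C : Set V))
    {x y : {u | u ≠ v}} (hxC : (x : V) ∉ (C : Set V)) (hyC : (y : V) ∉ (C : Set V))
    (hxy : ((quotientGraph T P).induce {D | D ≠ C}).connectedComponentMk
        (cellOfCompl hP C ⟨x, hxC⟩) =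
      ((quotientGraph T P).induce {D | D ≠ C}).connectedComponentMk (cellOfCompl hP C ⟨y, hyC⟩)) :
    (T.induce {u | u ≠ v}).connectedComponentMk x =
      (T.induce {u | u ≠ v}).connectedComponentMk y := by
  have hC_sub : (C : Set V)ᶜ ⊆ {u | u ≠ v} := fun u hu huv => hu (huv ▸ hvC)
  exact SimpleGraph.ConnectedComponent.sound <|
    (reachable_of_reachable_cellOfCompl hP hconn (SimpleGraph.ConnectedComponent.exact hxy)).map
      (T.induceHomOfLE hC_sub).toHom

theorem infinite_component_cellOfCompl (hP : Setoid.IsPartition P) (hfin : ∀ C ∈ P, C.Finite)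
    {C : P} {x : ((C : Set V)ᶜ : Set V)}
    (hx : ((T.induce (C : Set V)ᶜ).connectedComponentMk x).supp.Infinite) :
    (((quotientGraph T P).induce {D | D ≠ C}).connectedComponentMk
      (cellOfCompl hP C x)).supp.Infinite := by
  intro hcells
  have fiber_finite (D) : (cellOfCompl hP C ⁻¹' {D}).Finite :=
    ((hfin D D.1.2).preimage Subtype.val_injective.injOn).subset
      fun _ hz => (cellOfCompl_eq_iff hP).1 hz
  refine hx ((hcells.preimage' fun D _ => fiber_finite D).subset fun y hy => ?_)
  exact SimpleGraph.ConnectedComponent.sound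
    (reachable_cellOfCompl hP (SimpleGraph.ConnectedComponent.exact hy))

theorem infinite_component_quotientGraph_induce_ne (hT : T.Preconnected)
    (hP : Setoid.IsPartition P) (hfin : ∀ C ∈ P, C.Finite)
    (hfurc : ∀ C ∈ P, ∃ v ∈ C, IsFurcation T v) {C : P} (hC : (T.induce (C : Set V)).Preconnected)
    (k : ((quotientGraph T P).induce {D | D ≠ C}).ConnectedComponent) : k.supp.Infinite := by
  obtain ⟨D, rfl⟩ := k.exists_rep
  obtain ⟨w, hwD, hw⟩ := hfurc D D.1.2
  have hwC : w ∉ (C : Set V) := notMem_of_mem_of_ne hP D.2 hwD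
  have hcell : cellOfCompl hP C ⟨w, hwC⟩ = D := (cellOfCompl_eq_iff hP).2 hwD
  exact hcell ▸ infinite_component_cellOfCompl hP hfin
    (hw.infinite_component_induce_compl hT hC hwC)

theorem isFurcation_quotientGraph_of_mem (hP : Setoid.IsPartition P)
    (hconn : ∀ C ∈ P, (T.induce C).Preconnected) {C : P} (hC : (C : Set V).Finite)
    (hinf : ∀ k : ((quotientGraph T P).induce {D | D ≠ C}).ConnectedComponent, k.supp.Infinite)
    {v : V} (hvC : v ∈ (C : Set V)) (hv : IsFurcation T v) :
    IsFurcation (quotientGraph T P) C := by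
  have exists_outside (K : (T.induce {u | u ≠ v}).ConnectedComponent) (hK : K.supp.Infinite) :
      ∃ x ∈ K.supp, (x : V) ∉ (C : Set V) := by
    by_contra! hKC
    exact hK ((hC.preimage Subtype.val_injective.injOn).subset hKC)
  have component_ne {K L : (T.induce {u | u ≠ v}).ConnectedComponent} (hKL : K ≠ L)
      {x y : {u | u ≠ v}} (hx : x ∈ K.supp) (hy : y ∈ L.supp)
      (hxC : (x : V) ∉ (C : Set V)) (hyC : (y : V) ∉ (C : Set V)) :
      ((quotientGraph T P).induce {D | D ≠ C}).connectedComponentMk (cellOfCompl hP C ⟨x, hxC⟩) ≠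
        ((quotientGraph T P).induce {D | D ≠ C}).connectedComponentMk
          (cellOfCompl hP C ⟨y, hyC⟩) := fun hxy =>
    hKL (hx.symm.trans
      ((connectedComponentMk_induce_ne_eq_of_cellOfCompl hP hconn hvC hxC hyC hxy).trans hy))
  obtain ⟨K₁, K₂, K₃, h₁₂, h₁₃, h₂₃, hinf₁, hinf₂, hinf₃⟩ := hv
  obtain ⟨x₁, hx₁, hx₁C⟩ := exists_outside K₁ hinf₁
  obtain ⟨x₂, hx₂, hx₂C⟩ := exists_outside K₂ hinf₂
  obtain ⟨x₃, hx₃, hx₃C⟩ := exists_outside K₃ hinf₃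
  exact ⟨_, _, _, component_ne h₁₂ hx₁ hx₂ hx₁C hx₂C, component_ne h₁₃ hx₁ hx₃ hx₁C hx₃C,
    component_ne h₂₃ hx₂ hx₃ hx₂C hx₃C, hinf _, hinf _, hinf _⟩

theorem quotientGraph_all_furcations_general (hT : T.Preconnected)
    (hP : Setoid.IsPartition P) (hfin : ∀ C ∈ P, C.Finite)
    (hconn : ∀ C ∈ P, (T.induce C).Preconnected)
    (hfurc : ∀ C ∈ P, ∃ v ∈ C, IsFurcation T v) (C : P) :
    IsFurcation (quotientGraph T P) C ∧
      ∃ D₁ D₂ D₃ : P, D₁ ≠ D₂ ∧ D₁ ≠ D₃ ∧ D₂ ≠ D₃ ∧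
        (quotientGraph T P).Adj C D₁ ∧ (quotientGraph T P).Adj C D₂ ∧
        (quotientGraph T P).Adj C D₃ := by
  obtain ⟨v, hvC, hv⟩ := hfurc C C.2
  have hC : IsFurcation (quotientGraph T P) C :=
    isFurcation_quotientGraph_of_mem hP hconn (hfin C C.2)
      (infinite_component_quotientGraph_induce_ne hT hP hfin hfurc (hconn C C.2)) hvC hv
  exact ⟨hC, hC.exists_three_adj (quotientGraph_preconnected hP hT)⟩

end Quotient

/-- If `T` is an infinite locally finite tree and `Π` is a partition of its vertex set all
of whose cells are finite, induce connected subgraphs, and contain at least one furcation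
of `T`, then every vertex of the quotient graph `T^Π` is a furcation of `T^Π`; in particular
every vertex of `T^Π` has degree at least `3` (has three distinct neighbors). -/
theorem quotientGraph_all_furcations {V : Type*} [Infinite V] (T : SimpleGraph V)
    [T.LocallyFinite] (hT : T.IsTree)
    (P : Set (Set V)) (hP : Setoid.IsPartition P)
    (hfin : ∀ C ∈ P, C.Finite)
    (hconn : ∀ C ∈ P, (T.induce C).Connected)
    (hfurc : ∀ C ∈ P, ∃ v ∈ C, IsFurcation T v) :
    ∀ C : P, IsFurcation (quotientGraph T P) C ∧
      ∃ D₁ D₂ D₃ : P, D₁ ≠ D₂ ∧ D₁ ≠ D₃ ∧ D₂ ≠ D₃ ∧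
        (quotientGraph T P).Adj C D₁ ∧ (quotientGraph T P).Adj C D₂ ∧
        (quotientGraph T P).Adj C D₃ := by
  exact quotientGraph_all_furcations_general hT.connected.preconnected hP hfin
    (fun C hC => (hconn C hC).preconnected) hfurc
end

section
/- Let T be a locally finite tree, let S be a nonempty set of vertices of T, and let α be an injective real-valued function on the vertices of T. For a vertex v let S_v = {s ∈ S : dist(v,s) = dist(v,S)} be the set of elements of S closest to v (this set is finite and nonempty), and let φ(v) be the element of S_v minimizing α. Then: (i) for every s ∈ S, the set φ⁻¹(s) induces a connected subgraph of T (so the Voronoi cells form a partition of V(T) into connected sets); and (ii) each Voronoi cell φ⁻¹(s) contains exactly one element of S, namely s. -/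
/-!
If `s` is nearest to `v` in `S` and `w` lies on a geodesic from `v` to `s`, then `s` is also nearest
to `w`, and every element of `S` nearest to `w` is nearest to `v`. So if `s` wins the tie-break at
`v`, it wins it at `w` as well: the cell of `s` contains every geodesic from one of its vertices to
`s`, and is therefore connected.
-/

section Geodesics

variable {V : Type*} {G : SimpleGraph V} {u v w : V}

theorem dist_add_dist_of_mem_support_of_length_eq_dist {p : G.Walk u v}
    (hp : p.length = G.dist u v) (hw : w ∈ p.support) :
    G.dist u w + G.dist w v = G.dist u v := by
  obtain ⟨q, r, hqr⟩ := SimpleGraph.Walk.mem_support_iff_exists_append.mp hw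
  have hq : q.length = G.dist u w :=
    SimpleGraph.length_eq_dist_of_subwalk hp (SimpleGraph.Walk.isSubwalk_of_append_left hqr)
  have hr : r.length = G.dist w v :=
    SimpleGraph.length_eq_dist_of_subwalk hp (SimpleGraph.Walk.isSubwalk_of_append_right hqr)
  rw [← hq, ← hr, ← hp, hqr, SimpleGraph.Walk.length_append]

theorem connected_induce_of_forall_dist_add_dist_eq (hG : G.Connected) {C : Set V} {s : V}
    (hs : s ∈ C) (hC : ∀ v ∈ C, ∀ w, G.dist v w + G.dist w s = G.dist v s → w ∈ C) :
    (G.induce C).Connected := by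
  refine (SimpleGraph.connected_iff_exists_forall_reachable _).mpr ⟨⟨s, hs⟩, fun ⟨v, hv⟩ ↦ ?_⟩
  obtain ⟨p, hp⟩ := hG.exists_walk_length_eq_dist v s
  have support_subset : ∀ w ∈ p.support, w ∈ C := fun w hw ↦
    hC v hv w (dist_add_dist_of_mem_support_of_length_eq_dist hp hw)
  exact (p.induce C support_subset).reachable.symm

theorem finite_setOf_exists_walk_length_eq (G : SimpleGraph V) [G.LocallyFinite] (v : V) (n : ℕ) :
    {u | ∃ p : G.Walk v u, p.length = n}.Finite := by
  induction n generalizing v with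
  | zero =>
    refine (Set.finite_singleton v).subset ?_
    rintro u ⟨p, hp⟩
    exact (SimpleGraph.Walk.eq_of_length_eq_zero hp).symm
  | succ n ih =>
    refine ((G.neighborSet v).toFinite.biUnion fun w _ ↦ ih w).subset ?_
    rintro u ⟨_ | ⟨hvw, p⟩, hp⟩
    · cases hp
    · exact Set.mem_biUnion hvw ⟨p, Nat.succ_injective hp⟩

end Geodesics

/-- The set `S_v` of elements of `S` closest to the vertex `v`. Comparing with the other elements of
`S` avoids an infimum over `S`, which would have a junk value for empty `S`. -/
def nearestPoints {V : Type*} (G : SimpleGraph V) (S : Set V) (v : V) : Set V :=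
  {s ∈ S | ∀ s' ∈ S, G.dist v s ≤ G.dist v s'}

/-- `φ` is the map whose fibers are the Voronoi cells of `S`, with ties broken by `α`: it sends each
vertex to a nearest element of `S` of least `α`-value. -/
def IsVoronoiMap {V β : Type*} [LE β] (G : SimpleGraph V) (S : Set V) (α : V → β) (φ : V → V) :
    Prop :=
  ∀ v, φ v ∈ nearestPoints G S v ∧ ∀ s ∈ nearestPoints G S v, α (φ v) ≤ α s

section NearestPoints

variable {V : Type*} {G : SimpleGraph V} {S : Set V} {s t v w : V}

theorem nearestPoints_nonempty (G : SimpleGraph V) (hS : S.Nonempty) (v : V) :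
    (nearestPoints G S v).Nonempty := by
  obtain ⟨s, hs, hmin⟩ := exists_minimalFor_of_wellFoundedLT (· ∈ S) (G.dist v) hS
  exact ⟨s, hs, fun s' hs' ↦ (le_total _ _).elim id (hmin hs')⟩

theorem nearestPoints_finite [G.LocallyFinite] (hG : G.Connected) (S : Set V) (v : V) :
    (nearestPoints G S v).Finite := by
  obtain hempty | ⟨s, hs⟩ := (nearestPoints G S v).eq_empty_or_nonempty
  · exact hempty ▸ Set.finite_empty
  refine (finite_setOf_exists_walk_length_eq G v (G.dist v s)).subset fun t ht ↦ ?_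
  have dist_eq : G.dist v t = G.dist v s := le_antisymm (ht.2 s hs.1) (hs.2 t ht.1)
  exact dist_eq ▸ hG.exists_walk_length_eq_dist v t

theorem eq_of_mem_nearestPoints_of_mem (hG : G.Connected) (hs : s ∈ S)
    (ht : t ∈ nearestPoints G S s) : t = s := by
  have dist_le_zero : G.dist s t ≤ 0 := (ht.2 s hs).trans_eq G.dist_self
  exact (hG.dist_eq_zero_iff.mp (Nat.le_zero.mp dist_le_zero)).symm

theorem mem_nearestPoints_of_dist_add_dist_eq (hG : G.Connected) (hs : s ∈ nearestPoints G S v)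
    (hw : G.dist v w + G.dist w s = G.dist v s) : s ∈ nearestPoints G S w := by
  refine ⟨hs.1, fun s' hs' ↦ Nat.le_of_add_le_add_left (a := G.dist v w) ?_⟩
  calc G.dist v w + G.dist w s = G.dist v s := hw
    _ ≤ G.dist v s' := hs.2 s' hs'
    _ ≤ G.dist v w + G.dist w s' := hG.dist_triangle

theorem nearestPoints_subset_of_dist_add_dist_eq (hG : G.Connected)
    (hs : s ∈ nearestPoints G S v) (hw : G.dist v w + G.dist w s = G.dist v s) :
    nearestPoints G S w ⊆ nearestPoints G S v := by
  refine fun t ht ↦ ⟨ht.1, fun s' hs' ↦ ?_⟩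
  calc G.dist v t ≤ G.dist v w + G.dist w t := hG.dist_triangle
    _ ≤ G.dist v w + G.dist w s := Nat.add_le_add_left (ht.2 s hs.1) _
    _ = G.dist v s := hw
    _ ≤ G.dist v s' := hs.2 s' hs'

end NearestPoints

namespace IsVoronoiMap

section LE

variable {V β : Type*} [LE β] {G : SimpleGraph V} {S : Set V} {α : V → β} {φ : V → V} {s : V}

theorem apply_eq_self (hφ : IsVoronoiMap G S α φ) (hG : G.Connected) (hs : s ∈ S) : φ s = s :=
  eq_of_mem_nearestPoints_of_mem hG hs (hφ s).1

theorem preimage_singleton_inter_eq (hφ : IsVoronoiMap G S α φ) (hG : G.Connected) (hs : s ∈ S) :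
    φ ⁻¹' {s} ∩ S = {s} := by
  refine Set.Subset.antisymm ?_ (Set.singleton_subset_iff.mpr ⟨hφ.apply_eq_self hG hs, hs⟩)
  rintro t ⟨hts, ht⟩
  exact (hφ.apply_eq_self hG ht).symm.trans hts

end LE

variable {V β : Type*} [PartialOrder β] {G : SimpleGraph V} {S : Set V} {α : V → β} {φ : V → V}
  {s v w : V}

theorem apply_eq_of_dist_add_dist_eq (hφ : IsVoronoiMap G S α φ) (hG : G.Connected)
    (hα : Set.InjOn α S) (hw : G.dist v w + G.dist w (φ v) = G.dist v (φ v)) : φ w = φ v := by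
  obtain ⟨hv_mem, hv_least⟩ := hφ v
  obtain ⟨hw_mem, hw_least⟩ := hφ w
  refine hα hw_mem.1 hv_mem.1 (le_antisymm ?_ ?_)
  · exact hw_least _ (mem_nearestPoints_of_dist_add_dist_eq hG hv_mem hw)
  · exact hv_least _ (nearestPoints_subset_of_dist_add_dist_eq hG hv_mem hw hw_mem)

theorem connected_induce_preimage_singleton (hφ : IsVoronoiMap G S α φ) (hG : G.Connected)
    (hα : Set.InjOn α S) (hs : s ∈ S) : (G.induce (φ ⁻¹' {s})).Connected := by
  refine connected_induce_of_forall_dist_add_dist_eq hG (hφ.apply_eq_self hG hs) ?_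
  rintro v rfl w hw
  exact hφ.apply_eq_of_dist_add_dist_eq hG hα hw

end IsVoronoiMap

theorem voronoi_cells_connected_and_unique_center_general {V β : Type*} [PartialOrder β]
    (G : SimpleGraph V) [G.LocallyFinite] (hG : G.Connected) (S : Set V) (hS : S.Nonempty)
    (α : V → β) (hα : Set.InjOn α S) :
    (∀ v, (nearestPoints G S v).Finite ∧ (nearestPoints G S v).Nonempty) ∧
    ∀ φ, IsVoronoiMap G S α φ →
      ∀ s ∈ S, (G.induce (φ ⁻¹' {s})).Connected ∧ φ ⁻¹' {s} ∩ S = {s} :=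
  ⟨fun v ↦ ⟨nearestPoints_finite hG S v, nearestPoints_nonempty G hS v⟩, fun _ hφ _ hs ↦
    ⟨hφ.connected_induce_preimage_singleton hG hα hs, hφ.preimage_singleton_inter_eq hG hs⟩⟩

/-- **Voronoi partition of a tree.**
Let `T` be a locally finite tree, `S` a nonempty set of vertices and `α` an injective
real-valued function on the vertices.  For a vertex `v`, `closestInS v` denotes the set of
elements of `S` at minimal distance from `v`; it is finite and nonempty.  If `φ` assigns to
each vertex `v` the element of `closestInS v` with minimal `α`-value, then:
(i) for every `s ∈ S` the Voronoi cell `φ ⁻¹' {s}` induces a connected subgraph of `T`, and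
(ii) each Voronoi cell `φ ⁻¹' {s}` contains exactly one element of `S`, namely `s`. -/
theorem voronoi_cells_connected_and_unique_center {V : Type*} (T : SimpleGraph V)
    [T.LocallyFinite] (hT : T.IsTree) (S : Set V) (hS : S.Nonempty)
    (α : V → ℝ) (hα : Function.Injective α) :
    (∀ v : V, ({s ∈ S | ∀ s' ∈ S, T.dist v s ≤ T.dist v s'}).Finite ∧
              ({s ∈ S | ∀ s' ∈ S, T.dist v s ≤ T.dist v s'}).Nonempty) ∧
    ∀ φ : V → V,
      (∀ v : V, φ v ∈ {s ∈ S | ∀ s' ∈ S, T.dist v s ≤ T.dist v s'} ∧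
        ∀ s ∈ {s ∈ S | ∀ s' ∈ S, T.dist v s ≤ T.dist v s'}, α (φ v) ≤ α s) →
      ∀ s ∈ S, (T.induce (φ ⁻¹' {s})).Connected ∧ (φ ⁻¹' {s}) ∩ S = {s} :=
  voronoi_cells_connected_and_unique_center_general T hT.connected S hS α hα.injOn
end
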